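/- arXiv:1902.00446 — 6 statements merged into one kernel-verified Lean document; each statement's English description precedes it below -/
import Mathlib

section
/- Fix an integer k > 2, and set C_k = (k-1)/(2k²) if k is odd and C_k = (k-2)/(2k²) if k is even, and ε(k) = 1/φ(k) where φ is Euler's totient function. Then there exist a constant A > 0 and a bound p₀ such that for every prime p > p₀ with p ≡ 1 (mod k), writing n = (p-1)/k, the number N(p) of pairs (a, b) with 1 ≤ a < b ≤ n and a^k ≡ b^k (mod p) satisfies |N(p) − C_k · p| ≤ A · p^{1−ε(k)}. -/
/-- The number of coincidences `a^k ≡ b^k (mod p)` with `1 ≤ a < b ≤ (p-1)/k`. -/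
def coincidences (k p : ℕ) : ℕ :=
  ((Finset.Icc 1 ((p - 1) / k) ×ˢ Finset.Icc 1 ((p - 1) / k)).filter
    (fun q : ℕ × ℕ => q.1 < q.2 ∧ (q.1 : ZMod p) ^ k = (q.2 : ZMod p) ^ k)).card

/-- Elkies' constant `C_k = (k-1)/(2k²)` for odd `k`, `(k-2)/(2k²)` for even `k`. -/
noncomputable def elkiesConst (k : ℕ) : ℝ :=
  if Odd k then ((k : ℝ) - 1) / (2 * (k : ℝ) ^ 2) else ((k : ℝ) - 2) / (2 * (k : ℝ) ^ 2)


lemma Icc_upper (x y : ℝ) (h : x ≤ y + 1) : ((Finset.Icc ⌈x⌉ ⌊y⌋).card : ℝ) ≤ y - x + 1 := by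
  rw [Int.card_Icc]
  have h1 := Int.le_ceil x
  have h2 := Int.floor_le y
  rcases le_total 0 (⌊y⌋ + 1 - ⌈x⌉) with h0 | h0
  · have : (((⌊y⌋ + 1 - ⌈x⌉).toNat : ℤ) : ℝ) = ((⌊y⌋ + 1 - ⌈x⌉ : ℤ) : ℝ) := by
      rw [Int.toNat_of_nonneg h0]
    rw [Int.cast_natCast] at this
    rw [this]; push_cast; linarith
  · rw [Int.toNat_of_nonpos h0]; push_cast; linarith

lemma Icc_lower (x y : ℝ) : y - x - 1 ≤ ((Finset.Icc ⌈x⌉ ⌊y⌋).card : ℝ) := by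
  rw [Int.card_Icc]
  have h1 := Int.ceil_lt_add_one x
  have h2 := Int.lt_floor_add_one y
  have := Int.self_le_toNat (⌊y⌋ + 1 - ⌈x⌉)
  have : ((⌊y⌋ + 1 - ⌈x⌉ : ℤ) : ℝ) ≤ (((⌊y⌋ + 1 - ⌈x⌉).toNat : ℤ) : ℝ) := by exact_mod_cast this
  rw [Int.cast_natCast] at this
  push_cast at this
  linarith

noncomputable def gcnt (p n : ℕ) (q r a : ℤ) : ℕ :=
  ((Finset.Icc (1:ℤ) n).filter (fun b => (p:ℤ) ∣ q * b - r * a)).card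

lemma block (p n q : ℕ) (r a0 : ℤ) (hp : 0 < p) (hq : 0 < q) (hqp : q ≤ p)
    (hc : IsCoprime (q:ℤ) r) (hr : |r| * q ≤ p) (hn : 0 < n) :
    |(∑ i ∈ Finset.range q, (gcnt p n q r (a0 + i) : ℝ)) - (q:ℝ) * n / p| ≤ 4 := by
  classical
  set S : Finset (Σ _ : ℕ, ℤ) := (Finset.range q).sigma
    (fun i => (Finset.Icc (1:ℤ) n).filter (fun b => (p:ℤ) ∣ q * b - r * (a0 + i))) with hS
  have hcard : (∑ i ∈ Finset.range q, (gcnt p n q r (a0 + i) : ℝ)) = (S.card : ℝ) := by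
    rw [hS, Finset.card_sigma]; push_cast; rfl
  rw [hcard]
  have hpz : (0:ℤ) < p := by exact_mod_cast hp
  have hqz : (0:ℤ) < q := by exact_mod_cast hq
  have hpR : (0:ℝ) < p := by exact_mod_cast hp
  have hqR : (0:ℝ) < q := by exact_mod_cast hq
  have hnR : (1:ℝ) ≤ n := by exact_mod_cast hn
  set f : (Σ _ : ℕ, ℤ) → ℤ := fun s => (q * s.2 - r * (a0 + s.1)) / p with hf
  have key : ∀ s ∈ S, (p:ℤ) * f s = q * s.2 - r * (a0 + s.1) := by
    intro s hs
    simp only [hS, Finset.mem_sigma, Finset.mem_filter] at hs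
    exact Int.mul_ediv_cancel' hs.2.2
  have hinj : Set.InjOn f S := by
    intro s hs t ht hst
    have h1 := key s hs
    have h2 := key t ht
    rw [hst] at h1
    simp only [hS, Finset.coe_sigma, Set.mem_sigma_iff, Finset.mem_coe, Finset.mem_filter, Finset.mem_range, Finset.mem_Icc] at hs ht
    have h3 : (q:ℤ) ∣ r * ((s.1:ℤ) - t.1) := ⟨s.2 - t.2, by linarith⟩
    have h4 := hc.dvd_of_dvd_mul_left h3
    have h5 : (s.1:ℤ) - t.1 = 0 := by
      apply Int.eq_zero_of_abs_lt_dvd h4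
      rw [abs_lt]; constructor <;> omega
    have h6 : s.1 = t.1 := by omega
    have h7 : s.2 = t.2 := by
      rw [h6] at h1
      have : (q:ℤ) * s.2 = q * t.2 := by linarith
      exact mul_left_cancel₀ hqz.ne' this
    rcases s with ⟨s1, s2⟩; rcases t with ⟨t1, t2⟩
    simp only at h6 h7
    subst h6; subst h7; rfl
  rw [← Finset.card_image_of_injOn hinj]
  have hri : ∀ i : ℕ, i < q → |r * (i:ℤ)| ≤ |r| * q := by
    intro i hi
    rw [abs_mul]
    apply mul_le_mul_of_nonneg_left _ (abs_nonneg _)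
    rw [abs_of_nonneg (by positivity)]
    exact_mod_cast hi.le
  have hrR : ((|r| * q : ℤ) : ℝ) ≤ p := by exact_mod_cast hr
  set K : ℤ := |r| * q with hK
  have hK0 : 0 ≤ K := by positivity
  have hK0R : (0:ℝ) ≤ K := by exact_mod_cast hK0
  have hu : S.image f ⊆ Finset.Icc ⌈((q - r * a0 - K : ℤ) : ℝ) / p⌉ ⌊((q * n - r * a0 + K : ℤ) : ℝ) / p⌋ := by
    intro j hj
    obtain ⟨s, hs, rfl⟩ := Finset.mem_image.1 hj
    have h1 := key s hs
    simp only [hS, Finset.mem_sigma, Finset.mem_filter, Finset.mem_range, Finset.mem_Icc] at hs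
    have h2 := abs_le.1 (hri s.1 hs.1)
    have h3 : (q:ℤ) * 1 ≤ q * s.2 := mul_le_mul_of_nonneg_left hs.2.1.1 hqz.le
    have h4 : (q:ℤ) * s.2 ≤ q * n := mul_le_mul_of_nonneg_left hs.2.1.2 hqz.le
    rw [Finset.mem_Icc, Int.ceil_le, Int.le_floor, div_le_iff₀ hpR, le_div_iff₀ hpR]
    constructor
    · have : (q - r * a0 - K : ℤ) ≤ f s * p := by linarith
      exact_mod_cast this
    · have : f s * p ≤ (q * n - r * a0 + K : ℤ) := by linarith
      exact_mod_cast this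
  have hl : Finset.Icc ⌈((q - r * a0 + K : ℤ) : ℝ) / p⌉ ⌊((q * n - r * a0 - K : ℤ) : ℝ) / p⌋ ⊆ S.image f := by
    intro j hj
    rw [Finset.mem_Icc, Int.ceil_le, Int.le_floor, div_le_iff₀ hpR, le_div_iff₀ hpR] at hj
    have hj1 : (q - r * a0 + K : ℤ) ≤ j * p := by exact_mod_cast hj.1
    have hj2 : j * p ≤ (q * n - r * a0 - K : ℤ) := by exact_mod_cast hj.2
    obtain ⟨u, v, huv⟩ := hc
    -- r * v ≡ 1 mod q ; want r*(a0+i) ≡ -p j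
    set w : ℤ := (-(p * j) * v - a0) with hw
    obtain ⟨i, hi⟩ : ∃ i : ℕ, (i:ℤ) = w % q :=
      ⟨(w % q).toNat, Int.toNat_of_nonneg (Int.emod_nonneg _ hqz.ne')⟩
    have hiq : i < q := by
      have := Int.emod_lt_of_pos w hqz
      omega
    have hd : (q:ℤ) ∣ p * j + r * (a0 + i) := by
      have e : w = q * (w / q) + i := by rw [hi]; exact (Int.mul_ediv_add_emod w q).symm
      refine ⟨p * j * u - r * (w / q), ?_⟩
      have : (i:ℤ) = -(p * j) * v - a0 - q * (w / q) := by rw [← hw]; linarith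
      rw [this]
      linear_combination (-(p:ℤ) * j) * huv
    obtain ⟨b, hb⟩ := hd
    have h2 := abs_le.1 (hri i hiq)
    refine Finset.mem_image.2 ⟨⟨i, b⟩, ?_, ?_⟩
    · simp only [hS, Finset.mem_sigma, Finset.mem_filter, Finset.mem_range, Finset.mem_Icc]
      refine ⟨hiq, ⟨?_, ?_⟩, ⟨j, by linarith⟩⟩
      · have : (q:ℤ) * 1 ≤ q * b := by linarith
        exact le_of_mul_le_mul_left this hqz
      · have : (q:ℤ) * b ≤ q * n := by linarith
        exact le_of_mul_le_mul_left this hqz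
    · have : (q:ℤ) * b - r * (a0 + i) = p * j := by linarith
      simp only [hf, this]
      exact Int.mul_ediv_cancel_left _ hpz.ne'
  have cu : ((S.image f).card : ℝ) ≤ _ := (Nat.cast_le.2 (Finset.card_le_card hu)).trans (Icc_upper _ _ (by
    rw [div_add_one hpR.ne']
    gcongr
    push_cast
    nlinarith))
  have cl := (Icc_lower _ _).trans (Nat.cast_le (α := ℝ).2 (Finset.card_le_card hl))
  have hqpR : (q:ℝ) ≤ p := by exact_mod_cast hqp
  have e1 : (K:ℝ)/p ≤ 1 := (div_le_one hpR).2 hrR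
  have e2 : (q:ℝ)/p ≤ 1 := (div_le_one hpR).2 hqpR
  have e3 : 0 ≤ (q:ℝ)/p := by positivity
  push_cast at cu cl
  simp only [add_div, sub_div] at cu cl
  rw [abs_le]; constructor <;> linarith

lemma total (p n q : ℕ) (r : ℤ) (hp : 0 < p) (hq : 0 < q) (hqp : q ≤ p)
    (hc : IsCoprime (q:ℤ) r) (hr : |r| * q ≤ p) (hn : 0 < n) (hnp : n ≤ p) :
    |(∑ i ∈ Finset.range n, (gcnt p n q r (1 + i) : ℝ)) - (n:ℝ) * n / p| ≤ 4 * (n / q) + 4 + q := by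
  have hpR : (0:ℝ) < p := by exact_mod_cast hp
  have hqR : (0:ℝ) < q := by exact_mod_cast hq
  have ind : ∀ m : ℕ, |(∑ i ∈ Finset.range (m * q), (gcnt p n q r (1 + i) : ℝ)) - m * ((q:ℝ) * n / p)| ≤ 4 * m := by
    intro m
    induction m with
    | zero => simp
    | succ m ih =>
      rw [add_mul, one_mul, Finset.sum_range_add]
      have hb := block p n q r (1 + m * q) hp hq hqp hc hr hn
      have e : ∑ i ∈ Finset.range q, (gcnt p n q r (1 + ((m * q + i : ℕ):ℤ)) : ℝ) = ∑ i ∈ Finset.range q, (gcnt p n q r (1 + m * q + i) : ℝ) := by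
        refine Finset.sum_congr rfl fun i _ => ?_
        push_cast; rw [add_assoc]
      rw [e]
      rw [abs_le] at *
      push_cast
      constructor <;> linarith [ih.1, ih.2, hb.1, hb.2]
  have i1 := abs_le.1 (ind (n / q))
  have i2 := abs_le.1 (ind (n / q + 1))
  have m1 : n / q * q ≤ n := Nat.div_mul_le_self n q
  have m2 : n ≤ (n / q + 1) * q := by
    have := Nat.lt_mul_div_succ n hq
    rw [mul_comm]; exact this.le
  have s1 : (∑ i ∈ Finset.range (n / q * q), (gcnt p n q r (1 + i) : ℝ)) ≤ (∑ i ∈ Finset.range n, (gcnt p n q r (1 + i) : ℝ)) :=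
    Finset.sum_le_sum_of_subset_of_nonneg (Finset.range_mono m1) (fun _ _ _ => by positivity)
  have s2 : (∑ i ∈ Finset.range n, (gcnt p n q r (1 + i) : ℝ)) ≤ (∑ i ∈ Finset.range ((n / q + 1) * q), (gcnt p n q r (1 + i) : ℝ)) :=
    Finset.sum_le_sum_of_subset_of_nonneg (Finset.range_mono m2) (fun _ _ _ => by positivity)
  have d1 : ((n / q : ℕ) : ℝ) ≤ (n:ℝ) / q := Nat.cast_div_le
  set M : ℝ := ((n / q : ℕ) : ℝ) with hM
  have m1R : M * q ≤ n := by rw [hM]; exact_mod_cast m1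
  have m2R : (n:ℝ) ≤ (M + 1) * q := by rw [hM]; exact_mod_cast m2
  have hx : (n:ℝ) / p ≤ 1 := (div_le_one hpR).2 (by exact_mod_cast hnp)
  have hx0 : 0 ≤ (n:ℝ) / p := by positivity
  push_cast at i1 i2
  rw [← hM] at i2
  simp only [mul_div_assoc] at i1 i2 ⊢
  set x := (n:ℝ) / p
  have k1 : M * q * x ≤ n * x := mul_le_mul_of_nonneg_right m1R hx0
  have k2 : n * x ≤ (M + 1) * q * x := mul_le_mul_of_nonneg_right m2R hx0
  have k3 : q * x ≤ q := by nlinarith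
  rw [abs_le]
  constructor
  · nlinarith [i1.1]
  · nlinarith [i2.2]

lemma short_vec (p : ℕ) [hp : Fact p.Prime] (ζ : ZMod p) :
    ∃ q r : ℤ, IsCoprime q r ∧ q ^ 2 ≤ p ∧ r ^ 2 ≤ p ∧ (r : ZMod p) = ζ * q := by
  classical
  set s := Nat.sqrt p with hs
  have hlt : (Finset.univ : Finset (ZMod p)).card < (Finset.range (s+1) ×ˢ Finset.range (s+1)).card := by
    rw [Finset.card_univ, ZMod.card, Finset.card_product, Finset.card_range]
    exact Nat.lt_succ_sqrt p
  obtain ⟨x, hx, y, hy, hne, hxy⟩ := Finset.exists_ne_map_eq_of_card_lt_of_maps_to hlt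
    (f := fun x : ℕ × ℕ => (x.2 : ZMod p) - ζ * x.1) (fun _ _ => Finset.mem_coe.2 (Finset.mem_univ _))
  simp only [Finset.mem_product, Finset.mem_range] at hx hy
  have hsp : (s:ℤ)^2 ≤ p := by
    have := Nat.sqrt_le' p
    exact_mod_cast this
  set q : ℤ := (x.1:ℤ) - y.1 with hq
  set r : ℤ := (x.2:ℤ) - y.2 with hr
  have hqs : q ^ 2 ≤ p := le_trans (sq_le_sq.2 (by
    rw [abs_of_nonneg (by positivity : (0:ℤ) ≤ s), abs_le]; omega)) hsp
  have hrs : r ^ 2 ≤ p := le_trans (sq_le_sq.2 (by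
    rw [abs_of_nonneg (by positivity : (0:ℤ) ≤ s), abs_le]; omega)) hsp
  have hrq : (r : ZMod p) = ζ * q := by
    rw [hq, hr]; push_cast; linear_combination hxy
  have h0 : q ≠ 0 ∨ r ≠ 0 := by
    by_contra! h
    apply hne
    ext <;> omega
  have hg : 0 < Int.gcd q r := by
    rw [Int.gcd_pos_iff]; exact h0
  set g := Int.gcd q r with hgd
  obtain ⟨q', hq'⟩ : (g:ℤ) ∣ q := Int.gcd_dvd_left ..
  obtain ⟨r', hr'⟩ : (g:ℤ) ∣ r := Int.gcd_dvd_right ..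
  have hgz : (1:ℤ) ≤ g := by exact_mod_cast hg
  have hg2 : (g:ℤ)^2 ≤ p := by
    rcases h0 with h | h
    · have : q' ≠ 0 := by rintro rfl; simp at hq'; exact h hq'
      have : 1 ≤ q'^2 := by have := sq_pos_of_ne_zero this; omega
      rw [hq'] at hqs; nlinarith
    · have : r' ≠ 0 := by rintro rfl; simp at hr'; exact h hr'
      have : 1 ≤ r'^2 := by have := sq_pos_of_ne_zero this; omega
      rw [hr'] at hrs; nlinarith
  have hp1 : (1:ℤ) < p := by exact_mod_cast hp.out.one_lt
  have hgp : (g:ℤ) < p := by nlinarith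
  have hgp' : g < p := by exact_mod_cast hgp
  have hgne : (g : ZMod p) ≠ 0 := by
    rw [Ne, ZMod.natCast_eq_zero_iff]
    intro h; exact absurd (Nat.le_of_dvd hg h) (by omega)
  refine ⟨q', r', ?_, ?_, ?_, ?_⟩
  · rw [Int.isCoprime_iff_gcd_eq_one]
    have : g = g * Int.gcd q' r' := by
      conv_lhs => rw [hgd, hq', hr', Int.gcd_mul_left]
      simp
    nlinarith [Nat.eq_of_mul_eq_mul_left hg (by rw [mul_one]; exact this : g * 1 = g * Int.gcd q' r')]
  · rw [hq', mul_pow] at hqs; nlinarith [sq_nonneg q', mul_le_mul_of_nonneg_right (one_le_pow₀ hgz : (1:ℤ) ≤ (g:ℤ)^2) (sq_nonneg q')]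
  · rw [hr', mul_pow] at hrs; nlinarith [sq_nonneg r', mul_le_mul_of_nonneg_right (one_le_pow₀ hgz : (1:ℤ) ≤ (g:ℤ)^2) (sq_nonneg r')]
  · rw [hq', hr'] at hrq
    push_cast at hrq
    apply mul_left_cancel₀ hgne
    linear_combination hrq

noncomputable def cycConst (k : ℕ) : ℕ :=
  1 + ∑ d ∈ Nat.divisors k, ∑ i ∈ Finset.range (d.totient + 1), ((Polynomial.cyclotomic d ℤ).coeff i).natAbs

lemma cyc_bound (k p d : ℕ) [hp : Fact p.Prime] (hk : 0 < k) (hkp : k < p) (hd : d ∣ k) (hd2 : 2 < d)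
    (ζ : ZMod p) (hζ : IsPrimitiveRoot ζ d) (q r : ℤ) (M : ℕ) (hM : 0 < M)
    (h0 : q ≠ 0 ∨ r ≠ 0) (hq : |q| ≤ M) (hr : |r| ≤ M) (h : (r : ZMod p) = ζ * q) :
    p ≤ cycConst k * M ^ k.totient := by
  have hdk : d ≤ k := Nat.le_of_dvd hk hd
  have : NeZero (d : ZMod p) := ⟨by
    rw [Ne, ZMod.natCast_eq_zero_iff]
    intro h; have := Nat.le_of_dvd (by omega) h; omega⟩
  have hroot := (Polynomial.isRoot_cyclotomic_iff).2 hζ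
  set f := Polynomial.cyclotomic d ℤ with hf
  set F : ℤ := ∑ i ∈ Finset.range (d.totient + 1), f.coeff i * q ^ (d.totient - i) * r ^ i with hF
  have hdeg : f.natDegree = d.totient := Polynomial.natDegree_cyclotomic d ℤ
  have hFp : (p:ℤ) ∣ F := by
    rw [← ZMod.intCast_zmod_eq_zero_iff_dvd, hF]
    push_cast
    have e : ∀ i ∈ Finset.range (d.totient + 1), ((f.coeff i : ℤ) : ZMod p) * (q : ZMod p) ^ (d.totient - i) * (r : ZMod p) ^ i = (q:ZMod p) ^ d.totient * ((Polynomial.cyclotomic d (ZMod p)).coeff i * ζ ^ i) := by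
      intro i hi
      rw [Finset.mem_range] at hi
      have hh : (q:ZMod p) ^ d.totient = q ^ (d.totient - i) * q ^ i := by
        rw [← pow_add]; congr 1; omega
      rw [h, hh, ← Polynomial.map_cyclotomic_int d (ZMod p), Polynomial.coeff_map, mul_pow]
      simp only [eq_intCast]
      ring
    rw [Finset.sum_congr rfl e, ← Finset.mul_sum]
    have : ∑ i ∈ Finset.range (d.totient + 1), (Polynomial.cyclotomic d (ZMod p)).coeff i * ζ ^ i = 0 := by
      rw [← hroot.eq_zero, Polynomial.eval_eq_sum_range, Polynomial.natDegree_cyclotomic]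
    rw [this, mul_zero]
  have hF0 : F ≠ 0 := by
    by_cases hq0 : q = 0
    · have hr0 : r ≠ 0 := by tauto
      rw [hF, Finset.sum_range_succ, Finset.sum_eq_zero]
      · have : f.coeff d.totient = 1 := by
          rw [← hdeg]; exact Polynomial.cyclotomic.monic d ℤ
        rw [this]
        simp [hr0]
      · intro i hi
        rw [Finset.mem_range] at hi
        rw [hq0, zero_pow (by omega)]; ring
    · intro hz
      have hz' : (F:ℝ) = 0 := by exact_mod_cast hz
      have hqR : (q:ℝ) ≠ 0 := by exact_mod_cast hq0
      have pos := Polynomial.cyclotomic_pos hd2 ((r:ℝ)/q)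
      have e : (F:ℝ) = (q:ℝ) ^ d.totient * Polynomial.eval ((r:ℝ)/q) (Polynomial.cyclotomic d ℝ) := by
        rw [Polynomial.eval_eq_sum_range, Polynomial.natDegree_cyclotomic, Finset.mul_sum, hF]
        push_cast
        refine Finset.sum_congr rfl fun i hi => ?_
        rw [Finset.mem_range] at hi
        have hh : (q:ℝ) ^ d.totient = q ^ (d.totient - i) * q ^ i := by
          rw [← pow_add]; congr 1; omega
        rw [hh, ← Polynomial.map_cyclotomic_int d ℝ, Polynomial.coeff_map, div_pow]
        simp only [eq_intCast]
        field_simp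
        rw [← hf]; ring
      rw [e] at hz'
      rcases mul_eq_zero.1 hz' with h1 | h1
      · exact pow_ne_zero _ hqR h1
      · exact pos.ne' h1
  have hle : (p:ℤ) ≤ |F| := Int.le_of_dvd (abs_pos.2 hF0) ((dvd_abs _ _).2 hFp)
  have hup : |F| ≤ (∑ i ∈ Finset.range (d.totient + 1), |f.coeff i|) * (M:ℤ) ^ d.totient := by
    rw [hF, Finset.sum_mul]
    refine (Finset.abs_sum_le_sum_abs _ _).trans (Finset.sum_le_sum fun i hi => ?_)
    rw [Finset.mem_range] at hi
    have hh : (M:ℤ) ^ d.totient = M ^ (d.totient - i) * M ^ i := by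
      rw [← pow_add]; congr 1; omega
    rw [abs_mul, abs_mul, abs_pow, abs_pow, hh, mul_assoc]
    gcongr
  have hc : (∑ i ∈ Finset.range (d.totient + 1), |f.coeff i|) ≤ (cycConst k : ℤ) := by
    have h1 : (∑ i ∈ Finset.range (d.totient + 1), (f.coeff i).natAbs) ≤ cycConst k := by
      unfold cycConst
      have := Finset.single_le_sum (f := fun d => ∑ i ∈ Finset.range (d.totient + 1), ((Polynomial.cyclotomic d ℤ).coeff i).natAbs) (fun _ _ => Nat.zero_le _) (Nat.mem_divisors.2 ⟨hd, hk.ne'⟩)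
      rw [← hf] at this
      omega
    have h2 : ((∑ i ∈ Finset.range (d.totient + 1), (f.coeff i).natAbs : ℕ) : ℤ) ≤ cycConst k := by exact_mod_cast h1
    push_cast at h2
    exact h2
  have hpow : (M:ℤ) ^ d.totient ≤ (M:ℤ) ^ k.totient := by
    apply pow_le_pow_right₀ (by exact_mod_cast hM)
    exact Nat.le_of_dvd (Nat.totient_pos.2 hk) (Nat.totient_dvd_of_dvd hd)
  have : (p:ℤ) ≤ cycConst k * (M:ℤ) ^ k.totient := hle.trans (hup.trans (by gcongr))
  exact_mod_cast this

def Tset (p n : ℕ) (ζ : ZMod p) : Finset (ℕ × ℕ) :=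
  (Finset.Icc 1 n ×ˢ Finset.Icc 1 n).filter (fun x => (x.2 : ZMod p) = ζ * x.1)

lemma T_swap (p n : ℕ) [hp : Fact p.Prime] (ζ : ZMod p) (h : ζ ≠ 0) :
    (Tset p n ζ⁻¹).card = (Tset p n ζ).card := by
  apply Finset.card_bij (fun x _ => (x.2, x.1))
  · intro x hx
    simp only [Tset, Finset.mem_filter, Finset.mem_product] at hx ⊢
    refine ⟨hx.1.symm, ?_⟩
    rw [hx.2, mul_inv_cancel_left₀ h]
  · rintro ⟨a, b⟩ _ ⟨c, d⟩ _ h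
    simp only [Prod.mk.injEq] at h ⊢
    exact h.symm
  · rintro ⟨a, b⟩ hx
    refine ⟨(b, a), ?_, rfl⟩
    simp only [Tset, Finset.mem_filter, Finset.mem_product] at hx ⊢
    refine ⟨hx.1.symm, ?_⟩
    rw [hx.2, inv_mul_cancel_left₀ h]

lemma T_eq (p n : ℕ) [hp : Fact p.Prime] (ζ : ZMod p) (q r : ℤ) (hq : (q : ZMod p) ≠ 0)
    (h : (r : ZMod p) = ζ * q) :
    (Tset p n ζ).card = ∑ i ∈ Finset.range n, gcnt p n q r (1 + i) := by
  unfold gcnt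
  rw [← Finset.card_sigma]
  have key : ∀ a b : ℤ, (p:ℤ) ∣ q * b - r * a ↔ (b : ZMod p) = ζ * a := by
    intro a b
    rw [← ZMod.intCast_zmod_eq_zero_iff_dvd]
    push_cast
    rw [h, sub_eq_zero, mul_comm ζ, mul_assoc]
    exact mul_right_inj' hq
  apply Finset.card_bij (fun x _ => (⟨x.1 - 1, (x.2:ℤ)⟩ : Σ _ : ℕ, ℤ))
  · intro x hx
    simp only [Tset, Finset.mem_filter, Finset.mem_product, Finset.mem_Icc] at hx
    simp only [Finset.mem_sigma, Finset.mem_range, Finset.mem_filter, Finset.mem_Icc]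
    refine ⟨by omega, by omega, ?_⟩
    rw [key]
    have : (1 + ((x.1 - 1 : ℕ) : ℤ)) = (x.1 : ℤ) := by omega
    rw [this]
    simpa using hx.2
  · rintro ⟨a, b⟩ hx ⟨c, d⟩ hy h
    simp only [Tset, Finset.mem_filter, Finset.mem_product, Finset.mem_Icc] at hx hy
    simp only [Sigma.mk.injEq, heq_eq_eq] at h
    ext
    · simp only; omega
    · simp only; omega
  · rintro ⟨i, b⟩ hx
    simp only [Finset.mem_sigma, Finset.mem_range, Finset.mem_filter, Finset.mem_Icc] at hx
    rw [key] at hx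
    obtain ⟨m, rfl⟩ : ∃ m : ℕ, b = m := ⟨b.toNat, by omega⟩
    refine ⟨(i+1, m), ?_, by simp⟩
    simp only [Tset, Finset.mem_filter, Finset.mem_product, Finset.mem_Icc]
    refine ⟨by omega, ?_⟩
    have := hx.2.2
    push_cast at this ⊢
    rw [this]; ring

lemma T_bound1 (p n : ℕ) [hp : Fact p.Prime] (ζ : ZMod p) (q : ℕ) (r : ℤ) (hc : IsCoprime (q:ℤ) r)
    (hq : 0 < q) (hq2 : q ^ 2 ≤ p) (hrq : |r| ≤ q) (h : (r : ZMod p) = ζ * (q:ℤ)) (hn : 0 < n) (hnp : n ≤ p) :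
    |((Tset p n ζ).card : ℝ) - (n:ℝ) * n / p| ≤ 4 * (n / q) + 4 + q := by
  have hp1 := hp.out.one_lt
  have hqp : q < p := by nlinarith
  have hqne : ((q:ℤ) : ZMod p) ≠ 0 := by
    rw [Int.cast_natCast, Ne, ZMod.natCast_eq_zero_iff]
    intro h; exact absurd (Nat.le_of_dvd hq h) (by omega)
  rw [T_eq p n ζ q r hqne h]
  push_cast
  apply total p n q r (by omega) hq hqp.le hc _ hn hnp
  have : (q:ℤ)^2 ≤ p := by exact_mod_cast hq2
  nlinarith

lemma T_bound2 (p n : ℕ) [hp : Fact p.Prime] (ζ : ZMod p) (q r : ℤ) (hc : IsCoprime q r)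
    (hq : 0 < q.natAbs) (hq2 : q ^ 2 ≤ p) (hrq : |r| ≤ |q|) (h : (r : ZMod p) = ζ * q) (hn : 0 < n) (hnp : n ≤ p) :
    |((Tset p n ζ).card : ℝ) - (n:ℝ) * n / p| ≤ 4 * (n / q.natAbs) + 4 + q.natAbs := by
  have h2 : q.natAbs ^ 2 ≤ p := by
    have : ((q.natAbs : ℤ))^2 ≤ p := by rw [Int.natAbs_sq]; exact hq2
    exact_mod_cast this
  rcases le_total 0 q with h0 | h0
  · have e : (q.natAbs : ℤ) = q := by omega
    exact T_bound1 p n ζ q.natAbs r (by rwa [e]) hq h2 (by rw [e]; rwa [abs_of_nonneg h0] at hrq) (by rw [e]; exact h) hn hnp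
  · have e : (q.natAbs : ℤ) = -q := by omega
    refine T_bound1 p n ζ q.natAbs (-r) (by rw [e]; exact hc.neg_neg) hq h2 (by rw [e, abs_neg]; rwa [abs_of_nonpos h0] at hrq) (by rw [e]; push_cast; rw [h]; ring) hn hnp

lemma final_ineq (k p n q : ℕ) (hk : 2 < k) (hp : 1 < p) (hq : 0 < q) (hq2 : q ^ 2 ≤ p) (hnp : n ≤ p)
    (h : p ≤ cycConst k * q ^ k.totient) :
    (4 * ((n:ℝ) / q) + 4 + q) ≤ (4 * cycConst k + 5) * (p:ℝ) ^ ((1:ℝ) - 1 / (Nat.totient k : ℝ)) := by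
  set φ := k.totient with hφ
  have hφ2 : 2 ≤ φ := by
    have := Nat.totient_even hk
    have h2 := Nat.totient_pos.2 (by omega : 0 < k)
    rcases this with ⟨m, hm⟩; omega
  have hφR : (2:ℝ) ≤ φ := by exact_mod_cast hφ2
  have hinv : 1 / (φ:ℝ) ≤ 1/2 := one_div_le_one_div_of_le (by norm_num) hφR
  have hpR : (1:ℝ) < p := by exact_mod_cast hp
  have hp0 : (0:ℝ) < p := by linarith
  have hqR : (0:ℝ) < q := by exact_mod_cast hq
  have hC1 : (1:ℝ) ≤ cycConst k := by
    have : 1 ≤ cycConst k := by unfold cycConst; omega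
    exact_mod_cast this
  set C : ℝ := (cycConst k : ℝ)
  set P := (p:ℝ) ^ ((1:ℝ) - 1 / (φ : ℝ)) with hP
  have hP1 : 1 ≤ P := Real.one_le_rpow hpR.le (by linarith)
  have hqP : (q:ℝ) ≤ P := by
    have h1 : (q:ℝ) ≤ Real.sqrt p := Real.le_sqrt_of_sq_le (by exact_mod_cast hq2)
    rw [Real.sqrt_eq_rpow] at h1
    exact h1.trans (Real.rpow_le_rpow_of_exponent_le hpR.le (by linarith))
  have hroot : (p:ℝ) ^ (1 / (φ:ℝ)) ≤ C * q := by
    have h1 : (p:ℝ) ≤ (C * q) ^ φ := by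
      have h2 : (p:ℝ) ≤ (cycConst k : ℝ) * (q:ℝ) ^ φ := by exact_mod_cast h
      rw [mul_pow]
      exact h2.trans (mul_le_mul_of_nonneg_right (le_self_pow₀ hC1 (by omega)) (by positivity))
    have h3 := Real.rpow_le_rpow hp0.le h1 (by positivity : 0 ≤ 1 / (φ:ℝ))
    rwa [one_div, Real.pow_rpow_inv_natCast (by positivity) (by omega), ← one_div] at h3
  have hnq : (n:ℝ) / q ≤ C * P := by
    rw [div_le_iff₀ hqR]
    have h1 : (p:ℝ) = P * (p:ℝ) ^ (1 / (φ:ℝ)) := by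
      rw [hP, ← Real.rpow_add hp0]; simp
    have h2 : (n:ℝ) ≤ p := by exact_mod_cast hnp
    calc (n:ℝ) ≤ p := h2
      _ = P * (p:ℝ) ^ (1 / (φ:ℝ)) := h1
      _ ≤ P * (C * q) := by gcongr
      _ = _ := by ring
  nlinarith

lemma T_bound (k p n : ℕ) [hp : Fact p.Prime] (hk : 2 < k) (hkp : k < p) (ζ : ZMod p) (hζ : ζ ^ k = 1)
    (h1 : ζ ≠ 1) (h2 : ζ ≠ -1) (hn : 0 < n) (hnp : n ≤ p) :
    |((Tset p n ζ).card : ℝ) - (n:ℝ) * n / p| ≤ (4 * cycConst k + 5) * (p:ℝ) ^ ((1:ℝ) - 1 / (Nat.totient k : ℝ)) := by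
  have hprim := IsPrimitiveRoot.orderOf ζ
  have hd : orderOf ζ ∣ k := orderOf_dvd_of_pow_eq_one hζ
  have hd2 : 2 < orderOf ζ := by
    have h0 : 0 < orderOf ζ := Nat.pos_of_dvd_of_pos hd (by omega)
    have a1 : orderOf ζ ≠ 1 := by rw [Ne, orderOf_eq_one_iff]; exact h1
    have a2 : orderOf ζ ≠ 2 := by
      intro h
      have := pow_orderOf_eq_one ζ
      rw [h] at this
      rcases (sq_eq_sq_iff_eq_or_eq_neg.1 (this.trans (one_pow 2).symm)) with h | h <;> tauto
    omega
  have hζ0 : ζ ≠ 0 := by rintro rfl; rw [zero_pow (by omega)] at hζ; exact zero_ne_one hζ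
  obtain ⟨q, r, hc, hq2, hr2, h⟩ := short_vec p ζ
  have h0 : q ≠ 0 ∨ r ≠ 0 := by
    by_contra! h
    rw [h.1, h.2] at hc
    exact not_isCoprime_zero_zero hc
  have hp1 := hp.out.one_lt
  rcases le_total |r| |q| with hle | hle
  · have hq : 0 < q.natAbs := by
      rcases h0 with h | h
      · omega
      · have := abs_pos.2 h
        have := abs_pos.1 (this.trans_le hle)
        omega
    refine (T_bound2 p n ζ q r hc hq hq2 hle h hn hnp).trans ?_
    apply final_ineq k p n _ hk hp1 hq _ hnp
    · exact cyc_bound k p _ (by omega) hkp hd hd2 ζ hprim q r _ hq h0 (by simp) (by simpa using hle) h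
    · have : ((q.natAbs : ℤ))^2 ≤ p := by rw [Int.natAbs_sq]; exact hq2
      exact_mod_cast this
  · have hr : 0 < r.natAbs := by
      rcases h0 with h | h
      · have := abs_pos.2 h
        have := abs_pos.1 (this.trans_le hle)
        omega
      · omega
    rw [← T_swap p n ζ hζ0]
    refine (T_bound2 p n ζ⁻¹ r q hc.symm hr hr2 hle (by rw [h, inv_mul_cancel_left₀ hζ0]) hn hnp).trans ?_
    apply final_ineq k p n _ hk hp1 hr _ hnp
    · exact cyc_bound k p _ (by omega) hkp hd hd2 ζ hprim q r _ hr h0 (by simpa using hle) (by simp) h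
    · have : ((r.natAbs : ℤ))^2 ≤ p := by rw [Int.natAbs_sq]; exact hr2
      exact_mod_cast this

lemma coin_sum (k p : ℕ) [hp : Fact p.Prime] (hk : 2 < k) (hkp : p % k = 1) :
    2 * coincidences k p = ∑ ζ ∈ ((Polynomial.nthRootsFinset k (1 : ZMod p)).erase 1).erase (-1),
      (Tset p ((p - 1) / k) ζ).card := by
  classical
  set n := (p - 1) / k with hn
  have hp1 := hp.out.one_lt
  have hkn : n * 3 ≤ p - 1 := (Nat.mul_le_mul_left n hk).trans (Nat.div_mul_le_self _ _)
  have hnp : 2 * n < p := by omega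
  have hne : ∀ a : ℕ, 1 ≤ a → a ≤ n → (a : ZMod p) ≠ 0 := by
    intro a h1 h2
    rw [Ne, ZMod.natCast_eq_zero_iff]
    intro h; have := Nat.le_of_dvd (by omega) h; omega
  set E := (Finset.Icc 1 n ×ˢ Finset.Icc 1 n).filter
    (fun q : ℕ × ℕ => (q.1 : ZMod p) ^ k = (q.2 : ZMod p) ^ k) with hE
  set R := Polynomial.nthRootsFinset k (1 : ZMod p) with hR
  have hmem : ∀ ζ, ζ ∈ R ↔ ζ ^ k = 1 := fun ζ => Polynomial.mem_nthRootsFinset (by omega) 1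
  have e1 : E.card = ∑ ζ ∈ R, (Tset p n ζ).card := by
    rw [Finset.card_eq_sum_card_fiberwise (f := fun x : ℕ × ℕ => (x.2 : ZMod p) / x.1) (t := R)]
    · refine Finset.sum_congr rfl fun ζ hζ => ?_
      congr 1
      ext x
      rw [hmem] at hζ
      simp only [hE, Tset, Finset.mem_filter, Finset.mem_product, Finset.mem_Icc]
      constructor
      · rintro ⟨⟨h1, h2⟩, h3⟩
        refine ⟨h1, ?_⟩
        rw [← h3, div_mul_cancel₀ _ (hne _ h1.1.1 h1.1.2)]
      · rintro ⟨h1, h2⟩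
        refine ⟨⟨h1, ?_⟩, ?_⟩
        · rw [h2, mul_pow, hζ, one_mul]
        · rw [h2, mul_div_cancel_right₀ _ (hne _ h1.1.1 h1.1.2)]
    · intro x hx
      simp only [hE, Finset.coe_filter, Set.mem_ofPred_eq, Finset.mem_product, Finset.mem_Icc] at hx
      rw [Finset.mem_coe, hmem, div_pow, ← hx.2, div_self]
      exact pow_ne_zero _ (hne _ hx.1.1.1 hx.1.1.2)
  have e2 : E.card = coincidences k p + (coincidences k p + (Tset p n 1).card) := by
    rw [← Finset.card_filter_add_card_filter_not (s := E) (fun x => x.1 < x.2)]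
    rw [← Finset.card_filter_add_card_filter_not (s := E.filter (fun x => ¬ x.1 < x.2)) (fun x => x.2 < x.1)]
    congr 1
    · unfold coincidences
      rw [← hn, hE, Finset.filter_filter]
      congr 1
      ext x; simp only [Finset.mem_filter]; tauto
    congr 1
    · unfold coincidences
      rw [← hn]
      apply Finset.card_bij (fun x _ => (x.2, x.1))
      · intro x hx
        simp only [hE, Finset.mem_filter, Finset.mem_product] at hx ⊢
        exact ⟨hx.1.1.1.symm, hx.2, hx.1.1.2.symm⟩
      · rintro ⟨a, b⟩ _ ⟨c, d⟩ _ h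
        simp only [Prod.mk.injEq] at h ⊢
        exact h.symm
      · rintro ⟨a, b⟩ hx
        refine ⟨(b, a), ?_, rfl⟩
        simp only [hE, Finset.mem_filter, Finset.mem_product] at hx ⊢
        exact ⟨⟨⟨hx.1.symm, hx.2.2.symm⟩, by omega⟩, hx.2.1⟩
    · congr 1
      ext ⟨a, b⟩
      simp only [hE, Tset, Finset.mem_filter, Finset.mem_product, Finset.mem_Icc, one_mul]
      constructor
      · rintro ⟨⟨⟨h1, h2⟩, h3⟩, h4⟩
        have : a = b := by omega
        subst this
        exact ⟨h1, rfl⟩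
      · rintro ⟨h1, h2⟩
        rw [ZMod.natCast_eq_natCast_iff', Nat.mod_eq_of_lt (by omega), Nat.mod_eq_of_lt (by omega)] at h2
        subst h2
        exact ⟨⟨⟨h1, rfl⟩, by omega⟩, by omega⟩
  have e3 : (Tset p n (-1)).card = 0 := by
    rw [Finset.card_eq_zero, Tset, Finset.filter_eq_empty_iff]
    rintro ⟨a, b⟩ hx h
    simp only [Finset.mem_product, Finset.mem_Icc] at hx
    have : ((a + b : ℕ) : ZMod p) = 0 := by
      simp only at h
      push_cast; rw [h]; ring
    rw [ZMod.natCast_eq_zero_iff] at this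
    have := Nat.le_of_dvd (by omega) this
    omega
  have h1 : (1 : ZMod p) ∈ R := by rw [hmem]; simp
  have e4 : ∑ ζ ∈ (R.erase 1).erase (-1), (Tset p n ζ).card = ∑ ζ ∈ R.erase 1, (Tset p n ζ).card := by
    exact Finset.sum_erase _ e3
  rw [e4]
  have := Finset.add_sum_erase R (fun ζ => (Tset p n ζ).card) h1
  omega

lemma card_R (k p : ℕ) [hp : Fact p.Prime] (hk : 2 < k) (hkp : p % k = 1) :
    ((((Polynomial.nthRootsFinset k (1 : ZMod p)).erase 1).erase (-1)).card : ℝ)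
      = 2 * k ^ 2 * elkiesConst k := by
  classical
  have hp1 := hp.out.one_lt
  have hd : k ∣ p - 1 := (Nat.modEq_iff_dvd' hp1.le).1 (by rw [Nat.ModEq, hkp, Nat.mod_eq_of_lt (by omega)])
  have hkle := Nat.le_of_dvd (by omega) hd
  have : NeZero (p - 1) := ⟨by omega⟩
  have hE : HasEnoughRootsOfUnity (ZMod p) k := HasEnoughRootsOfUnity.of_dvd (ZMod p) hd
  obtain ⟨ζ, hζ⟩ := HasEnoughRootsOfUnity.exists_primitiveRoot (ZMod p) k
  have hc := hζ.card_nthRootsFinset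
  set R := Polynomial.nthRootsFinset k (1 : ZMod p) with hR
  have hmem : ∀ ζ, ζ ∈ R ↔ ζ ^ k = 1 := fun ζ => Polynomial.mem_nthRootsFinset (by omega) 1
  have h1 : (1 : ZMod p) ∈ R := by rw [hmem]; simp
  have hc1 : (R.erase 1).card = k - 1 := by rw [Finset.card_erase_of_mem h1, hc]
  have : Fact (2 < p) := ⟨by omega⟩
  have hkR : (k:ℝ) ≠ 0 := by have : k ≠ 0 := by omega
                             exact_mod_cast this
  unfold elkiesConst
  split_ifs with ho
  · rw [Finset.erase_eq_of_notMem, hc1]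
    · rw [Nat.cast_sub (by omega)]; push_cast; field_simp
    · intro h
      have := (hmem _).1 (Finset.mem_of_mem_erase h)
      rw [ho.neg_one_pow] at this
      exact ZMod.neg_one_ne_one this
  · rw [Finset.card_erase_of_mem, hc1]
    · rw [Nat.sub_sub, Nat.cast_sub (by omega)]; push_cast; field_simp
    · rw [Finset.mem_erase, hmem]
      exact ⟨ZMod.neg_one_ne_one, (Nat.not_odd_iff_even.1 ho).neg_one_pow⟩

theorem elkies_coincidence_count (k : ℕ) (hk : 2 < k) :
    ∃ A : ℝ, 0 < A ∧ ∃ p₀ : ℕ, ∀ p : ℕ, p.Prime → p₀ < p → p % k = 1 →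
      |(coincidences k p : ℝ) - elkiesConst k * (p : ℝ)|
        ≤ A * (p : ℝ) ^ ((1 : ℝ) - 1 / (Nat.totient k : ℝ)) := by
  refine ⟨k * (4 * cycConst k + 5) + k, by positivity, 0, ?_⟩
  intro p hp _ hkp
  have : Fact p.Prime := ⟨hp⟩
  have hp1 := hp.one_lt
  have hsum := coin_sum k p hk hkp
  have hcard := card_R k p hk hkp
  set R' := ((Polynomial.nthRootsFinset k (1 : ZMod p)).erase 1).erase (-1) with hR'
  have hd : k ∣ p - 1 := (Nat.modEq_iff_dvd' hp1.le).1 (by rw [Nat.ModEq, hkp, Nat.mod_eq_of_lt (by omega)])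
  have hkle := Nat.le_of_dvd (by omega) hd
  have hnk : k * ((p - 1) / k) = p - 1 := Nat.mul_div_cancel' hd
  set n := (p - 1) / k with hn
  have hn0 : 0 < n := Nat.div_pos hkle (by omega)
  have hnp : n ≤ p := (Nat.div_le_self _ _).trans (by omega)
  set P := (p : ℝ) ^ ((1 : ℝ) - 1 / (Nat.totient k : ℝ)) with hP
  have hpR : (1:ℝ) < p := by exact_mod_cast hp1
  have hkR : (2:ℝ) < k := by exact_mod_cast hk
  have hP1 : 1 ≤ P := by
    apply Real.one_le_rpow hpR.le
    have h1 : (1:ℝ) ≤ k.totient := by exact_mod_cast Nat.totient_pos.2 (by omega)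
    have := (div_le_one (by linarith)).2 h1
    linarith
  have hT : ∀ ζ ∈ R', |((Tset p n ζ).card : ℝ) - (n:ℝ) * n / p| ≤ (4 * cycConst k + 5) * P := by
    intro ζ hζ
    rw [hR', Finset.mem_erase, Finset.mem_erase, Polynomial.mem_nthRootsFinset (by omega)] at hζ
    exact T_bound k p n hk (by omega) ζ hζ.2.2 hζ.2.1 hζ.1 hn0 hnp
  have hRk : (R'.card : ℝ) ≤ k := by
    rw [hcard, elkiesConst]
    have hne : (2 * (k:ℝ) ^ 2) ≠ 0 := by positivity
    split_ifs <;> rw [mul_div_cancel₀ _ hne] <;> linarith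
  have hS : |2 * (coincidences k p : ℝ) - R'.card * ((n:ℝ) * n / p)| ≤ k * ((4 * cycConst k + 5) * P) := by
    have e : 2 * (coincidences k p : ℝ) = ∑ ζ ∈ R', ((Tset p n ζ).card : ℝ) := by exact_mod_cast hsum
    rw [e, ← nsmul_eq_mul, ← Finset.sum_const, ← Finset.sum_sub_distrib]
    refine (Finset.abs_sum_le_sum_abs _ _).trans ((Finset.sum_le_sum hT).trans ?_)
    rw [Finset.sum_const, nsmul_eq_mul]
    gcongr
  have hnR : (k:ℝ) * n = p - 1 := by
    have : ((k * n : ℕ) : ℝ) = ((p - 1 : ℕ) : ℝ) := by rw [hnk]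
    rw [Nat.cast_sub hp1.le] at this
    push_cast at this; exact this
  have hmain : |(n:ℝ) * n / p - p / k ^ 2| ≤ 1 := by
    have e : (n:ℝ) = (p - 1) / k := by rw [← hnR]; field_simp
    have e2 : (n:ℝ) * n / p - p / k ^ 2 = -((2 * p - 1) / (k ^ 2 * p)) := by
      rw [e]; field_simp; ring
    rw [e2, abs_neg, abs_of_nonneg (div_nonneg (by linarith) (by positivity)), div_le_one (by positivity)]
    have hk2 : (2:ℝ) ≤ (k:ℝ)^2 := by nlinarith
    nlinarith [mul_le_mul_of_nonneg_right hk2 (by linarith : (0:ℝ) ≤ p)]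
  have hm2 : |R'.card * ((n:ℝ) * n / p) - 2 * (elkiesConst k * p)| ≤ k := by
    have e : (R'.card : ℝ) * ((n:ℝ) * n / p) - 2 * (elkiesConst k * p) = R'.card * ((n:ℝ) * n / p - p / k ^ 2) := by
      rw [mul_sub, hcard]; field_simp
    rw [e, abs_mul, Nat.abs_cast]
    nlinarith [abs_nonneg ((n:ℝ) * n / p - p / k ^ 2)]
  have hkP : (k:ℝ) ≤ k * P := le_mul_of_one_le_right (by linarith) hP1
  have hpos : 0 ≤ k * ((4 * cycConst k + 5) * P) := by positivity
  rw [abs_le] at *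
  constructor <;> nlinarith [hS.1, hS.2, hm2.1, hm2.2]
end

section
/- Let n be a positive integer, let (G, +) be an abelian group of order n, and let h : {1,…,n} → G be a partial G-isomorphism. Then h extends to a unique multiplicative map ĥ : K_n → G, i.e., a unique map with ĥ(ab) = ĥ(a) + ĥ(b) for all a, b ∈ K_n and ĥ(i) = h(i) for all i ∈ {1,…,n}. Moreover, the map h⁻¹ ∘ ĥ : K_n → {1,…,n} is an n-satisfactory coloring of K_n; equivalently, for every a ∈ K_n and all integers i, j with 1 ≤ i < j ≤ n, ĥ(ia) ≠ ĥ(ja). -/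
/-- The `n`-core: the set of `n`-smooth positive integers. -/
def Kcore (n : ℕ) : Set ℕ := {m : ℕ | 0 < m ∧ ∀ p : ℕ, p.Prime → p ∣ m → p ≤ n}

/-- A partial `G`-isomorphism `h : {1,…,n} → G` (a bijection with `h(ab) = h a + h b`
whenever `a`, `b`, `ab ∈ {1,…,n}`) extends to a unique multiplicative map
`ĥ : K_n → G`, and the induced coloring is `n`-satisfactory: `ĥ(i*a) ≠ ĥ(j*a)` for
`a ∈ K_n` and `1 ≤ i < j ≤ n`. -/
theorem partial_isomorphism_extends (n : ℕ) (hn : 0 < n)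
    (G : Type*) [AddCommGroup G] [Fintype G] (hcard : Fintype.card G = n)
    (h : ℕ → G)
    (hinj : Set.InjOn h (Set.Icc 1 n))
    (hsurj : Set.SurjOn h (Set.Icc 1 n) Set.univ)
    (hmul : ∀ a b : ℕ, a ∈ Set.Icc 1 n → b ∈ Set.Icc 1 n → a * b ∈ Set.Icc 1 n →
      h (a * b) = h a + h b) :
    ∃ H : ℕ → G,
      (∀ i ∈ Set.Icc 1 n, H i = h i) ∧
      (∀ a ∈ Kcore n, ∀ b ∈ Kcore n, H (a * b) = H a + H b) ∧
      (∀ H' : ℕ → G, (∀ i ∈ Set.Icc 1 n, H' i = h i) →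
        (∀ a ∈ Kcore n, ∀ b ∈ Kcore n, H' (a * b) = H' a + H' b) →
        ∀ m ∈ Kcore n, H' m = H m) ∧
      (∀ a ∈ Kcore n, ∀ i j : ℕ, 1 ≤ i → i < j → j ≤ n →
        H (i * a) ≠ H (j * a)) := by
  have h1 : h 1 = 0 := by
    have := hmul 1 1 ⟨le_rfl, hn⟩ ⟨le_rfl, hn⟩ ⟨le_rfl, hn⟩
    simpa using this
  let H : ℕ → G := fun m => (m.primeFactorsList.map h).sum
  have Hmul : ∀ a b : ℕ, a ≠ 0 → b ≠ 0 → H (a * b) = H a + H b := by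
    intro a b ha hb
    have hp := (Nat.perm_primeFactorsList_mul ha hb).map h
    simp only [H]
    rw [hp.sum_eq, List.map_append, List.sum_append]
  have H1 : H 1 = 0 := by simp [H]
  have Hp : ∀ p : ℕ, p.Prime → H p = h p := by
    intro p hp
    simp [H, Nat.primeFactorsList_prime hp]
  have Hext : ∀ i : ℕ, 1 ≤ i → i ≤ n → H i = h i := by
    intro i
    induction i using induction_on_primes with
    | zero => intro h0; omega
    | one => intro _ _; rw [H1, h1]
    | prime_mul p a hp ih =>
      intro h2 h3
      have ha : 0 < a := Nat.pos_of_ne_zero (by rintro rfl; simp at h2)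
      have hp0 : 0 < p := hp.pos
      have han : a ≤ n := le_trans (Nat.le_mul_of_pos_left a hp0) h3
      have hpn : p ≤ n := le_trans (Nat.le_mul_of_pos_right p ha) h3
      rw [Hmul p a hp0.ne' ha.ne', Hp p hp, ih ha han,
        hmul p a ⟨hp0, hpn⟩ ⟨ha, han⟩ ⟨h2, h3⟩]
  have hK : ∀ i : ℕ, 1 ≤ i → i ≤ n → i ∈ Kcore n := by
    intro i h2 h3
    exact ⟨h2, fun p _ hd => le_trans (Nat.le_of_dvd h2 hd) h3⟩
  refine ⟨H, fun i hi => Hext i hi.1 hi.2, fun a ha b hb => Hmul a b ha.1.ne' hb.1.ne', ?_, ?_⟩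
  · intro H' hE hM m
    induction m using induction_on_primes with
    | zero => intro h0; exact absurd h0.1 (lt_irrefl 0)
    | one => intro _; rw [hE 1 ⟨le_rfl, hn⟩, H1, h1]
    | prime_mul p a hp ih =>
      intro hm
      have ha : 0 < a := Nat.pos_of_ne_zero (by rintro rfl; simpa using hm.1)
      have hpn : p ≤ n := hm.2 p hp (dvd_mul_right p a)
      have haK : a ∈ Kcore n := ⟨ha, fun q hq hd => hm.2 q hq (hd.mul_left p)⟩
      rw [hM p (hK p hp.pos hpn) a haK, Hmul p a hp.pos.ne' ha.ne', ih haK, Hp p hp,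
        hE p ⟨hp.pos, hpn⟩]
  · intro a ha i j hi hij hj heq
    rw [Hmul i a (by omega) ha.1.ne', Hmul j a (by omega) ha.1.ne', Hext i hi (by omega),
      Hext j (by omega) hj] at heq
    have := hinj ⟨hi, by omega⟩ ⟨by omega, hj⟩ (add_right_cancel heq)
    omega
end

section
/- Let n > 1 be an integer. If there exists a multiplicative n-satisfactory coloring of K_n, then the set of multiplicative n-satisfactory colorings of the positive integers — functions c : ℤ⁺ → {1,…,n} with c(i) = i for all i ∈ {1,…,n}, such that for every positive integer a and all 1 ≤ i < j ≤ n one has c(ia) ≠ c(ja), and such that there is a commutative group operation ⊕ on {1,…,n} with c(ab) = c(a) ⊕ c(b) for all positive integers a, b — has the cardinality of the continuum, 2^{ℵ₀}. -/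
/-- `op` is a commutative group operation on `{1,…,n}`. -/
def IsCommGroupOpOn (n : ℕ) (op : ℕ → ℕ → ℕ) : Prop :=
  (∀ i ∈ Finset.Icc 1 n, ∀ j ∈ Finset.Icc 1 n, op i j ∈ Finset.Icc 1 n) ∧
  (∀ i ∈ Finset.Icc 1 n, ∀ j ∈ Finset.Icc 1 n, op i j = op j i) ∧
  (∀ i ∈ Finset.Icc 1 n, ∀ j ∈ Finset.Icc 1 n, ∀ l ∈ Finset.Icc 1 n,
    op (op i j) l = op i (op j l)) ∧
  (∃ e ∈ Finset.Icc 1 n, (∀ i ∈ Finset.Icc 1 n, op e i = i) ∧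
    (∀ i ∈ Finset.Icc 1 n, ∃ j ∈ Finset.Icc 1 n, op i j = e))

/-- The commutative monoid carried by the colours. -/
@[reducible] def colMon (n : ℕ) (op : ℕ → ℕ → ℕ) (h1 : 1 ∈ Finset.Icc 1 n)
    (hop : IsCommGroupOpOn n op)
    (hid : ∀ i ∈ Finset.Icc 1 n, op 1 i = i) : CommMonoid {x : ℕ // x ∈ Finset.Icc 1 n} where
  mul a b := ⟨op a.1 b.1, hop.1 _ a.2 _ b.2⟩
  one := ⟨1, h1⟩
  mul_assoc a b c := Subtype.ext (hop.2.2.1 _ a.2 _ b.2 _ c.2)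
  mul_comm a b := Subtype.ext (hop.2.1 _ a.2 _ b.2)
  one_mul a := Subtype.ext (hid _ a.2)
  mul_one a := Subtype.ext ((hop.2.1 _ a.2 _ h1).trans (hid _ a.2))

/-- Completely multiplicative extension of a function on primes. -/
noncomputable def cext {G : Type} [CommMonoid G] (g : ℕ → G) (m : ℕ) : G :=
  m.factorization.prod fun p k => g p ^ k

theorem cext_mul {G : Type} [CommMonoid G] (g : ℕ → G) {a b : ℕ} (ha : 0 < a) (hb : 0 < b) :
    cext g (a * b) = cext g a * cext g b := by
  unfold cext
  rw [Nat.factorization_mul ha.ne' hb.ne']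
  exact Finsupp.prod_add_index' (by simp) (fun _ _ _ => pow_add _ _ _)

theorem cext_one {G : Type} [CommMonoid G] (g : ℕ → G) : cext g 1 = 1 := by
  simp [cext]

theorem cext_prime {G : Type} [CommMonoid G] (g : ℕ → G) {p : ℕ} (hp : p.Prime) :
    cext g p = g p := by
  simp [cext, hp.factorization]

theorem mem_Kcore_of_le {n i : ℕ} (h : i ∈ Finset.Icc 1 n) : i ∈ Kcore n := by
  rw [Finset.mem_Icc] at h
  exact ⟨h.1, fun p _ hd => (Nat.le_of_dvd h.1 hd).trans h.2⟩

/-- If there is a multiplicative `n`-satisfactory coloring of `K_n` (with `n > 1`),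
then the set of multiplicative `n`-satisfactory colorings of the positive integers
has the cardinality of the continuum. -/
theorem continuum_many_multiplicative_colorings (n : ℕ) (hn : 1 < n)
    (h : ∃ c : ℕ → ℕ,
      (∀ i ∈ Finset.Icc 1 n, c i = i) ∧
      (∀ m ∈ Kcore n, c m ∈ Finset.Icc 1 n) ∧
      (∀ a ∈ Kcore n, ∀ i j : ℕ, 1 ≤ i → i < j → j ≤ n →
        c (i * a) ≠ c (j * a)) ∧
      (∃ op : ℕ → ℕ → ℕ, IsCommGroupOpOn n op ∧
        ∀ a ∈ Kcore n, ∀ b ∈ Kcore n, c (a * b) = op (c a) (c b))) :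
    Cardinal.mk {c : ℕ → ℕ //
      (∀ i ∈ Finset.Icc 1 n, c i = i) ∧
      (∀ m : ℕ, 0 < m → c m ∈ Finset.Icc 1 n) ∧
      (∀ a : ℕ, 0 < a → ∀ i j : ℕ, 1 ≤ i → i < j → j ≤ n →
        c (i * a) ≠ c (j * a)) ∧
      (∃ op : ℕ → ℕ → ℕ, IsCommGroupOpOn n op ∧
        ∀ a b : ℕ, 0 < a → 0 < b → c (a * b) = op (c a) (c b))} =
    Cardinal.continuum := by
  apply le_antisymm
  · refine (Cardinal.mk_subtype_le _).trans ?_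
    simp
  obtain ⟨c, hci, hcm, -, op, hop, hmul⟩ := h
  have h1 : 1 ∈ Finset.Icc 1 n := Finset.mem_Icc.2 ⟨le_rfl, hn.le⟩
  have h2 : 2 ∈ Finset.Icc 1 n := Finset.mem_Icc.2 ⟨by norm_num, hn⟩
  have hid : ∀ i ∈ Finset.Icc 1 n, op 1 i = i := by
    intro i hi
    have := hmul 1 (mem_Kcore_of_le h1) i (mem_Kcore_of_le hi)
    rw [one_mul, hci 1 h1, hci i hi] at this
    exact this.symm
  have hinv : ∀ i ∈ Finset.Icc 1 n, ∃ j ∈ Finset.Icc 1 n, op i j = 1 := by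
    obtain ⟨e, he, he1, he2⟩ := hop.2.2.2
    have : e = 1 := by
      rw [← he1 1 h1, hop.2.1 e he 1 h1, hid e he]
    subst this
    exact he2
  letI M := colMon n op h1 hop hid
  have hval : ∀ a b : {x : ℕ // x ∈ Finset.Icc 1 n}, (a * b).1 = op a.1 b.1 := fun _ _ => rfl
  classical
  let P := {p : ℕ // p.Prime ∧ n < p}
  let g : (P → Bool) → ℕ → {x : ℕ // x ∈ Finset.Icc 1 n} := fun T p =>
    if h : p ∈ Finset.Icc 1 n then ⟨p, h⟩
    else if h' : p.Prime ∧ n < p then (if T ⟨p, h'⟩ then ⟨2, h2⟩ else ⟨1, h1⟩) else ⟨1, h1⟩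
  have hfix : ∀ T, ∀ i ∈ Finset.Icc 1 n, (cext (g T) i).1 = i := by
    intro T i
    induction i using Nat.strong_induction_on with
    | _ i ih =>
      intro hi
      have hi' := Finset.mem_Icc.1 hi
      rcases eq_or_ne i 1 with rfl | hne
      · rw [cext_one]; rfl
      obtain ⟨p, hp, b, rfl⟩ := Nat.exists_prime_and_dvd hne
      have hb : 0 < b := Nat.pos_of_ne_zero (by rintro rfl; simp at hi')
      have hbn : b < p * b := by nlinarith [hp.two_le]
      have hpn : p ≤ p * b := Nat.le_mul_of_pos_right _ hb
      have hpI : p ∈ Finset.Icc 1 n := Finset.mem_Icc.2 ⟨hp.one_le, hpn.trans hi'.2⟩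
      have hbI : b ∈ Finset.Icc 1 n := Finset.mem_Icc.2 ⟨hb, hbn.le.trans hi'.2⟩
      rw [cext_mul _ hp.pos hb, hval, ih b hbn hbI, cext_prime _ hp]
      have hg : (g T p).1 = p := by simp only [g, dif_pos hpI]
      have := hmul p (mem_Kcore_of_le hpI) b (mem_Kcore_of_le hbI)
      rw [hci _ hi, hci _ hpI, hci _ hbI] at this
      rw [hg, ← this]
  have hinf : Infinite P := by
    refine Set.infinite_coe_iff.2 (Set.infinite_of_not_bddAbove ?_)
    rintro ⟨B, hB⟩
    obtain ⟨p, hp, hpp⟩ := Nat.exists_infinite_primes (max B n + 1)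
    have : p ≤ B := hB ⟨hpp, by omega⟩
    omega
  have hcard : Cardinal.mk (P → Bool) = Cardinal.continuum := by
    simp
  rw [← hcard]
  refine Cardinal.mk_le_of_injective (f := fun T => ⟨fun m => (cext (g T) m).1, hfix T,
    fun m _ => (cext (g T) m).2, ?_, op, hop, ?_⟩) ?_
  · intro a ha i j hi hij hj heq
    have hiI : i ∈ Finset.Icc 1 n := Finset.mem_Icc.2 ⟨hi, by omega⟩
    have hjI : j ∈ Finset.Icc 1 n := Finset.mem_Icc.2 ⟨by omega, hj⟩
    have heq := Subtype.ext heq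
    rw [cext_mul _ (by omega) ha, cext_mul _ (by omega) ha] at heq
    obtain ⟨y, hy, hy1⟩ := hinv _ (cext (g T) a).2
    have hy' : cext (g T) a * ⟨y, hy⟩ = 1 := Subtype.ext hy1
    have h3 := congrArg (· * (⟨y, hy⟩ : {x : ℕ // x ∈ Finset.Icc 1 n})) heq
    simp only [mul_assoc, hy', mul_one] at h3
    have h4 := congrArg Subtype.val h3
    rw [hfix T i hiI, hfix T j hjI] at h4
    omega
  · intro a b ha hb
    beta_reduce
    rw [cext_mul _ ha hb, hval]
  · intro T U hTU
    funext ⟨p, hp⟩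
    have h5 := congrFun (congrArg Subtype.val hTU) p
    have hpI : ¬ p ∈ Finset.Icc 1 n := fun h => by
      have := (Finset.mem_Icc.1 h).2
      omega
    simp only [cext_prime _ hp.1, g, dif_neg hpI, dif_pos hp] at h5
    cases hT : T ⟨p, hp⟩ <;> cases hU : U ⟨p, hp⟩ <;> simp [hT, hU] at h5 ⊢
end

section
/- Let n be a positive integer and let c : K_n → {1,…,n} be an n-satisfactory coloring with c(i) = i for all i ∈ {1,…,n}. If c is translation invariant, then c is multiplicative: the binary operation on {1,…,n} defined by i ⊕ j = c(ij) is a commutative group operation, and c(ab) = c(a) ⊕ c(b) for all a, b ∈ K_n. -/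
/-- A translation invariant `n`-satisfactory coloring of `K_n` is multiplicative:
`i ⊕ j := c (i*j)` defines a commutative group operation on `{1,…,n}`, and
`c (a*b) = c a ⊕ c b` for all `a, b ∈ K_n`. -/
theorem translation_invariant_implies_multiplicative (n : ℕ) (hn : 0 < n)
    (c : ℕ → ℕ)
    (hrange : ∀ m ∈ Kcore n, c m ∈ Finset.Icc 1 n)
    (hid : ∀ i ∈ Finset.Icc 1 n, c i = i)
    (hsat : ∀ a ∈ Kcore n, ∀ i j : ℕ, 1 ≤ i → i < j → j ≤ n →
      c (i * a) ≠ c (j * a))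
    (hti : ∀ k ∈ Kcore n, ∀ l ∈ Kcore n, ∀ m ∈ Kcore n,
      (c (k * l) = c (k * m) ↔ c l = c m)) :
    IsCommGroupOpOn n (fun i j => c (i * j)) ∧
    ∀ a ∈ Kcore n, ∀ b ∈ Kcore n, c (a * b) = c (c a * c b) := by
  have hK : ∀ i ∈ Finset.Icc 1 n, i ∈ Kcore n := by
    intro i hi
    rw [Finset.mem_Icc] at hi
    exact ⟨by omega, fun p _ hd => (Nat.le_of_dvd (by omega) hd).trans hi.2⟩
  have hM : ∀ a ∈ Kcore n, ∀ b ∈ Kcore n, a * b ∈ Kcore n := by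
    intro a ha b hb
    refine ⟨Nat.mul_pos ha.1 hb.1, fun p hp hd => ?_⟩
    rcases (Nat.Prime.dvd_mul hp).1 hd with h | h
    · exact ha.2 p hp h
    · exact hb.2 p hp h
  have hC : ∀ a ∈ Kcore n, c a ∈ Kcore n := fun a ha => hK _ (hrange a ha)
  have hR : ∀ a ∈ Kcore n, ∀ b ∈ Kcore n, c (a * b) = c (a * c b) := fun a ha b hb =>
    (hti a ha b hb _ (hC b hb)).2 (hid _ (hrange b hb)).symm
  have hL : ∀ a ∈ Kcore n, ∀ b ∈ Kcore n, c (a * b) = c (c a * b) := by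
    intro a ha b hb
    rw [mul_comm a b, hR b hb a ha, mul_comm]
  have h1 : 1 ∈ Finset.Icc 1 n := Finset.mem_Icc.2 ⟨le_refl _, hn⟩
  refine ⟨⟨?_, ?_, ?_, 1, h1, ?_, ?_⟩, ?_⟩
  · intro i hi j hj
    exact hrange _ (hM _ (hK i hi) _ (hK j hj))
  · intro i _ j _
    simp only [mul_comm]
  · intro i hi j hj l hl
    have hi := hK i hi
    have hj := hK j hj
    have hl := hK l hl
    change c (c (i * j) * l) = c (i * c (j * l))
    rw [← hL _ (hM i hi j hj) l hl, ← hR i hi _ (hM j hj l hl), mul_assoc]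
  · intro i hi
    change c (1 * i) = i
    rw [one_mul, hid i hi]
  · intro i hi
    have hinj : Set.InjOn (fun j => c (i * j)) (Finset.Icc 1 n : Finset ℕ) := by
      intro a ha b hb hab
      have ha := Finset.mem_coe.1 ha
      have hb := Finset.mem_coe.1 hb
      have h := (hti i (hK i hi) a (hK a ha) b (hK b hb)).1 hab
      rwa [hid a ha, hid b hb] at h
    have hmaps : Set.MapsTo (fun j => c (i * j)) (Finset.Icc 1 n : Finset ℕ)
        (Finset.Icc 1 n : Finset ℕ) := by
      intro a ha
      exact hrange _ (hM _ (hK i hi) _ (hK a (Finset.mem_coe.1 ha)))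
    obtain ⟨j, hj, h⟩ := Finset.surjOn_of_injOn_of_card_le _ hmaps hinj le_rfl
      (Finset.mem_coe.2 h1)
    exact ⟨j, Finset.mem_coe.1 hj, h⟩
  · intro a ha b hb
    rw [hL a ha b hb, hR _ (hC a ha) b hb]
end

section
/- Let p be a prime and set n = p² − p and G = (ℤ/p²ℤ)ˣ, the unit group modulo p² (which has order n). Then there exists a partial G-isomorphism, i.e., a bijection g : {1,…,n} → G such that g(ij) = g(i)·g(j) whenever i, j, and ij all lie in {1,…,n}. Consequently, there exists an n-satisfactory coloring of K_n for n = p² − p. -/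
/-- The completely multiplicative map with `p ↦ -1`. -/
noncomputable def gmap (p : ℕ) (hp : p.Prime) (m : ℕ) : (ZMod (p ^ 2))ˣ :=
  if h : m ≠ 0 then
    (-1) ^ (m.factorization p) * ZMod.unitOfCoprime (m / p ^ m.factorization p)
      (((Nat.coprime_ordCompl hp h).symm).pow_right 2)
  else 1

lemma gmap_val (p : ℕ) (hp : p.Prime) (m : ℕ) (h : m ≠ 0) :
    ((gmap p hp m : (ZMod (p ^ 2))ˣ) : ZMod (p ^ 2)) =
      (-1) ^ (m.factorization p) * ((m / p ^ m.factorization p : ℕ) : ZMod (p ^ 2)) := by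
  unfold gmap
  rw [dif_pos h]
  simp [ZMod.coe_unitOfCoprime]

lemma gmap_mul (p : ℕ) (hp : p.Prime) (a b : ℕ) (ha : a ≠ 0) (hb : b ≠ 0) :
    gmap p hp (a * b) = gmap p hp a * gmap p hp b := by
  apply Units.ext
  rw [Units.val_mul, gmap_val p hp _ (mul_ne_zero ha hb), gmap_val p hp _ ha, gmap_val p hp _ hb,
    Nat.ordCompl_mul, Nat.factorization_mul ha hb]
  push_cast
  rw [Pi.add_apply, pow_add]
  ring

lemma gmap_coprime (p : ℕ) (hp : p.Prime) (m : ℕ) (h : ¬ p ∣ m) :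
    ((gmap p hp m : (ZMod (p ^ 2))ˣ) : ZMod (p ^ 2)) = (m : ZMod (p ^ 2)) := by
  have h0 : m ≠ 0 := by rintro rfl; simp at h
  rw [gmap_val p hp m h0, Nat.factorization_eq_zero_of_not_dvd h]
  simp

lemma gmap_p (p : ℕ) (hp : p.Prime) (k : ℕ) (h : ¬ p ∣ k) :
    ((gmap p hp (p * k) : (ZMod (p ^ 2))ˣ) : ZMod (p ^ 2)) = -(k : ZMod (p ^ 2)) := by
  have h0 : k ≠ 0 := by rintro rfl; simp at h
  rw [gmap_mul p hp p k hp.ne_zero h0, Units.val_mul, gmap_coprime p hp k h,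
    gmap_val p hp p hp.ne_zero, hp.factorization_self]
  simp [Nat.div_self hp.pos]

/-- Elements of the interval are prime to `p` or `p` times something small. -/
lemma split_interval (p : ℕ) (hp : p.Prime) (i : ℕ) (h1 : 1 ≤ i) (h2 : i ≤ p ^ 2 - p) :
    ¬ p ∣ i ∨ ∃ k, i = p * k ∧ 0 < k ∧ k < p := by
  by_cases h : p ∣ i
  · right
    obtain ⟨k, rfl⟩ := h
    refine ⟨k, rfl, Nat.pos_of_ne_zero (by rintro rfl; simp at h1), ?_⟩
    by_contra hk
    have : p * p ≤ p * k := Nat.mul_le_mul_left p (by omega)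
    have := hp.pos
    have : p ^ 2 = p * p := sq p
    have : 0 < p * p := by positivity
    omega
  · exact Or.inl h

lemma gmap_injOn (p : ℕ) (hp : p.Prime) : Set.InjOn (gmap p hp) (Set.Icc 1 (p ^ 2 - p)) := by
  have hpp := hp.pos
  have hsq : p ^ 2 = p * p := sq p
  have hle : p ≤ p * p := Nat.le_mul_self p
  have key : ∀ a b : ℕ, a < p ^ 2 → b < p ^ 2 → (a : ZMod (p ^ 2)) = b → a = b := by
    intro a b ha hb h
    rw [ZMod.natCast_eq_natCast_iff'] at h
    rwa [Nat.mod_eq_of_lt ha, Nat.mod_eq_of_lt hb] at h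
  have mixed : ∀ a k : ℕ, 1 ≤ a → a ≤ p ^ 2 - p → k < p → (a : ZMod (p ^ 2)) ≠ -(k : ZMod (p ^ 2)) := by
    intro a k h1 h2 hk h
    have h' : ((a + k : ℕ) : ZMod (p ^ 2)) = ((0 : ℕ) : ZMod (p ^ 2)) := by
      push_cast; rw [h]; simp
    have := key _ _ (by omega) (by omega) h'
    omega
  rintro i ⟨hi1, hi2⟩ j ⟨hj1, hj2⟩ h
  have h' := congrArg (Units.val) h
  rcases split_interval p hp i hi1 hi2 with hi | ⟨k, rfl, hk0, hk⟩ <;>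
  rcases split_interval p hp j hj1 hj2 with hj | ⟨l, rfl, hl0, hl⟩
  · rw [gmap_coprime p hp i hi, gmap_coprime p hp j hj] at h'
    exact key _ _ (by omega) (by omega) h'
  · rw [gmap_coprime p hp i hi, gmap_p p hp l (Nat.not_dvd_of_pos_of_lt hl0 hl)] at h'
    exact absurd h' (mixed _ _ hi1 hi2 hl)
  · rw [gmap_coprime p hp j hj, gmap_p p hp k (Nat.not_dvd_of_pos_of_lt hk0 hk)] at h'
    exact absurd h'.symm (mixed _ _ hj1 hj2 hk)
  · rw [gmap_p p hp l (Nat.not_dvd_of_pos_of_lt hl0 hl),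
      gmap_p p hp k (Nat.not_dvd_of_pos_of_lt hk0 hk)] at h'
    rw [key k l (by omega) (by omega) (neg_injective h')]

lemma gmap_surjOn (p : ℕ) (hp : p.Prime) :
    Set.SurjOn (gmap p hp) (Set.Icc 1 (p ^ 2 - p)) Set.univ := by
  have hpp := hp.pos
  have hsq : p ^ 2 = p * p := sq p
  have hle : p ≤ p * p := Nat.le_mul_self p
  have : NeZero (p ^ 2) := ⟨by positivity⟩
  intro x _
  have hlt := ZMod.val_lt (x : ZMod (p ^ 2))
  have hcop := ZMod.val_coe_unit_coprime x
  have hval : (((x : ZMod (p ^ 2)).val : ℕ) : ZMod (p ^ 2)) = x := ZMod.natCast_zmod_val _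
  generalize (x : ZMod (p ^ 2)).val = r at hlt hcop hval
  have hnd : ¬ p ∣ r := by
    rw [← hp.coprime_iff_not_dvd]
    exact ((Nat.Coprime.coprime_dvd_right (dvd_pow_self p two_ne_zero)) hcop).symm
  have hr0 : r ≠ 0 := by rintro rfl; simp at hnd
  by_cases hr : r ≤ p ^ 2 - p
  · refine ⟨r, ⟨by omega, hr⟩, Units.ext ?_⟩
    rw [gmap_coprime p hp r hnd, hval]
  · have hk0 : 0 < p ^ 2 - r := by omega
    have hk : p ^ 2 - r < p := by omega
    refine ⟨p * (p ^ 2 - r), ⟨Nat.mul_pos hpp hk0, ?_⟩, Units.ext ?_⟩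
    · calc p * (p ^ 2 - r) ≤ p * (p - 1) := Nat.mul_le_mul_left p (by omega)
        _ = p ^ 2 - p := by rw [Nat.mul_sub, hsq, mul_one]
    · rw [gmap_p p hp _ (Nat.not_dvd_of_pos_of_lt hk0 hk), Nat.cast_sub hlt.le,
        ZMod.natCast_self, hval]
      simp

/-- For any prime `p`, setting `n = p² - p` and `G = (ℤ/p²ℤ)ˣ`, there is a partial
`G`-isomorphism `g : {1,…,n} → G` (a bijection with `g(ij) = g i * g j` whenever
`i`, `j`, `ij ∈ {1,…,n}`); consequently there is an `n`-satisfactory coloring of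
`K_n`. -/
theorem coloring_of_p_sq_minus_p (p : ℕ) (hp : p.Prime) :
    (∃ g : ℕ → (ZMod (p ^ 2))ˣ,
      Set.InjOn g (Set.Icc 1 (p ^ 2 - p)) ∧
      Set.SurjOn g (Set.Icc 1 (p ^ 2 - p)) Set.univ ∧
      (∀ i j : ℕ, i ∈ Set.Icc 1 (p ^ 2 - p) → j ∈ Set.Icc 1 (p ^ 2 - p) →
        i * j ∈ Set.Icc 1 (p ^ 2 - p) → g (i * j) = g i * g j)) ∧
    (∃ c : ℕ → ℕ,
      (∀ m ∈ Kcore (p ^ 2 - p), c m ∈ Finset.Icc 1 (p ^ 2 - p)) ∧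
      (∀ a ∈ Kcore (p ^ 2 - p), ∀ i j : ℕ, 1 ≤ i → i < j → j ≤ p ^ 2 - p →
        c (i * a) ≠ c (j * a))) := by
  refine ⟨⟨gmap p hp, gmap_injOn p hp, gmap_surjOn p hp, ?_⟩, ?_⟩
  · rintro i j ⟨hi, _⟩ ⟨hj, _⟩ _
    exact gmap_mul p hp i j (by omega) (by omega)
  · have hs : ∀ x : (ZMod (p ^ 2))ˣ, ∃ i, i ∈ Set.Icc 1 (p ^ 2 - p) ∧ gmap p hp i = x :=
      fun x => gmap_surjOn p hp (Set.mem_univ x)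
    choose f hf1 hf2 using hs
    refine ⟨fun m => f (gmap p hp m), fun m _ => Finset.mem_Icc.mpr (hf1 _), ?_⟩
    intro a ha i j hi hij hj h
    have ha0 : a ≠ 0 := ha.1.ne'
    have h2 := congrArg (gmap p hp) h
    simp only [hf2] at h2
    rw [gmap_mul p hp i a (by omega) ha0, gmap_mul p hp j a (by omega) ha0] at h2
    have := gmap_injOn p hp ⟨hi, by omega⟩ ⟨by omega, hj⟩ (mul_right_cancel h2)
    omega
end

section
/- The set of 6-satisfactory colorings of K_6 — functions c : K_6 → {1,…,6} with c(i) = i for all i ∈ {1,…,6} such that for every a ∈ K_6 and all integers i, j with 1 ≤ i < j ≤ 6, c(ia) ≠ c(ja) — has the cardinality of the continuum, 2^{ℵ₀}. In particular, since there are only finitely many multiplicative 6-satisfactory colorings of K_6, there exist nonmultiplicative 6-satisfactory colorings. -/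
/-- `c : K_n → {1,…,n}` is an `n`-satisfactory coloring of `K_n`, normalized by
`c i = i` for `i ∈ {1,…,n}`. -/
def IsSatisfactoryOnCore (n : ℕ) (c : ↥(Kcore n) → ℕ) : Prop :=
  (∀ x : ↥(Kcore n), (x : ℕ) ≤ n → c x = (x : ℕ)) ∧
  (∀ x : ↥(Kcore n), c x ∈ Finset.Icc 1 n) ∧
  (∀ a : ↥(Kcore n), ∀ i j : ℕ, 1 ≤ i → i < j → j ≤ n →
    ∀ x y : ↥(Kcore n), (x : ℕ) = i * (a : ℕ) → (y : ℕ) = j * (a : ℕ) →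
      c x ≠ c y)

def colG (p r : ℕ) : ℕ :=
  if p = 0 then (if r = 0 then 1 else if r = 1 then 2 else 4)
  else (if r = 0 then 3 else if r = 1 then 6 else 5)

def colF (s : ℕ → Bool) (A B : ℕ) : ℕ :=
  colG (B % 2) (if 2 ≤ B ∧ s (B - 2) = true then (2 * A) % 3 else A % 3)

def col (s : ℕ → Bool) (m : ℕ) : ℕ :=
  colF s (m.factorization 2 + 2 * m.factorization 5) (m.factorization 3 + m.factorization 5)

theorem col_form (s : ℕ → Bool) (a b c : ℕ) :
    col s (2 ^ a * 3 ^ b * 5 ^ c) = colF s (a + 2 * c) (b + c) := by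
  have h2 : Nat.Prime 2 := by norm_num
  have h3 : Nat.Prime 3 := by norm_num
  have h5 : Nat.Prime 5 := by norm_num
  unfold col
  rw [Nat.factorization_mul (by positivity) (by positivity),
    Nat.factorization_mul (by positivity) (by positivity),
    h2.factorization_pow, h3.factorization_pow, h5.factorization_pow]
  simp

theorem core_form (x : ℕ) (hx : x ∈ Kcore 6) : ∃ a b c : ℕ, x = 2 ^ a * 3 ^ b * 5 ^ c := by
  obtain ⟨h0, h⟩ := hx
  induction x using Nat.strong_induction_on with
  | _ x ih =>
    by_cases h1 : x = 1
    · exact ⟨0, 0, 0, by simp [h1]⟩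
    · obtain ⟨p, hp, y, rfl⟩ := Nat.exists_prime_and_dvd h1
      have hy : 0 < y := Nat.pos_of_mul_pos_left h0
      have hp6 := h p hp (dvd_mul_right _ _)
      obtain ⟨a, b, c, e⟩ := ih y (by nlinarith [hp.two_le]) hy
        (fun q hq hd => h q hq (hd.mul_left _))
      have h2 := hp.two_le
      interval_cases p
      · exact ⟨a + 1, b, c, by rw [e]; ring⟩
      · exact ⟨a, b + 1, c, by rw [e]; ring⟩
      · norm_num at hp
      · exact ⟨a, b, c + 1, by rw [e]; ring⟩
      · norm_num at hp

theorem form_core (a b c : ℕ) : 2 ^ a * 3 ^ b * 5 ^ c ∈ Kcore 6 := by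
  refine ⟨by positivity, fun p hp hd => ?_⟩
  rcases hp.dvd_mul.1 hd with hd | hd
  · rcases hp.dvd_mul.1 hd with hd | hd
    · have := Nat.le_of_dvd (by norm_num) (hp.dvd_of_dvd_pow hd); omega
    · have := Nat.le_of_dvd (by norm_num) (hp.dvd_of_dvd_pow hd); omega
  · have := Nat.le_of_dvd (by norm_num) (hp.dvd_of_dvd_pow hd); omega

theorem colG_inj {p r p' r' : ℕ} (hp : p < 2) (hr : r < 3) (hp' : p' < 2) (hr' : r' < 3)
    (h : colG p r = colG p' r') : p = p' ∧ r = r' := by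
  interval_cases p <;> interval_cases r <;> interval_cases p' <;> interval_cases r' <;>
    simp [colG] at h ⊢

theorem colF_eq {s : ℕ → Bool} {A B A' B' : ℕ} (h : colF s A B = colF s A' B') :
    B % 2 = B' % 2 ∧ (B = B' → A % 3 = A' % 3) := by
  have := colG_inj (by omega) (by split_ifs <;> omega) (by omega) (by split_ifs <;> omega) h
  refine ⟨this.1, ?_⟩
  rintro rfl
  have := this.2
  split_ifs at this <;> omega

theorem col_mul (s : ℕ → Bool) (i a b c : ℕ) (h1 : 1 ≤ i) (h6 : i ≤ 6) :
    ∃ A B, col s (i * (2 ^ a * 3 ^ b * 5 ^ c)) = colF s (a + 2 * c + A) (b + c + B) ∧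
      ((i = 1 ∧ A = 0 ∧ B = 0) ∨ (i = 2 ∧ A = 1 ∧ B = 0) ∨ (i = 3 ∧ A = 0 ∧ B = 1) ∨
       (i = 4 ∧ A = 2 ∧ B = 0) ∨ (i = 5 ∧ A = 2 ∧ B = 1) ∨ (i = 6 ∧ A = 1 ∧ B = 1)) := by
  interval_cases i
  · exact ⟨0, 0, by rw [one_mul, col_form]; rfl, by simp⟩
  · refine ⟨1, 0, ?_, by simp⟩
    rw [show 2 * (2 ^ a * 3 ^ b * 5 ^ c) = 2 ^ (a + 1) * 3 ^ b * 5 ^ c by ring, col_form]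
    congr 1; ring
  · refine ⟨0, 1, ?_, by simp⟩
    rw [show 3 * (2 ^ a * 3 ^ b * 5 ^ c) = 2 ^ a * 3 ^ (b + 1) * 5 ^ c by ring, col_form]
    congr 1; ring
  · refine ⟨2, 0, ?_, by simp⟩
    rw [show 4 * (2 ^ a * 3 ^ b * 5 ^ c) = 2 ^ (a + 2) * 3 ^ b * 5 ^ c by ring, col_form]
    congr 1; ring
  · refine ⟨2, 1, ?_, by simp⟩
    rw [show 5 * (2 ^ a * 3 ^ b * 5 ^ c) = 2 ^ a * 3 ^ b * 5 ^ (c + 1) by ring, col_form]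
    congr 1
  · refine ⟨1, 1, ?_, by simp⟩
    rw [show 6 * (2 ^ a * 3 ^ b * 5 ^ c) = 2 ^ (a + 1) * 3 ^ (b + 1) * 5 ^ c by ring, col_form]
    congr 1 <;> ring

theorem col_sat (s : ℕ → Bool) : IsSatisfactoryOnCore 6 (fun x => col s x) := by
  refine ⟨?_, ?_, ?_⟩
  · rintro ⟨x, hx⟩ h
    have h0 := hx.1
    simp only at h ⊢
    obtain ⟨A, B, h, h'⟩ := col_mul s x 0 0 0 h0 h
    simp only [pow_zero, mul_one, mul_zero, zero_add] at h
    rw [h]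
    rcases h' with ⟨rfl, rfl, rfl⟩ | ⟨rfl, rfl, rfl⟩ | ⟨rfl, rfl, rfl⟩ | ⟨rfl, rfl, rfl⟩ |
      ⟨rfl, rfl, rfl⟩ | ⟨rfl, rfl, rfl⟩ <;> simp [colF, colG]
  · intro x
    simp only [col, colF, colG, Finset.mem_Icc]
    split_ifs <;> omega
  · rintro ⟨a, ha⟩ i j hi hij hj x y hx hy h
    obtain ⟨u, v, w, rfl⟩ := core_form a ha
    simp only at hx hy h
    rw [hx, hy] at h
    obtain ⟨A, B, e, h1⟩ := col_mul s i u v w hi (by omega)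
    obtain ⟨A', B', e', h2⟩ := col_mul s j u v w (by omega) hj
    rw [e, e'] at h
    have := colF_eq h
    omega

theorem col_probe (s : ℕ → Bool) (n : ℕ) :
    col s (2 ^ 1 * 3 ^ (n + 2) * 5 ^ 0) = colG (n % 2) (if s n = true then 2 else 1) := by
  rw [col_form]
  simp [colF]

theorem continuum_many_six_colorings :
    Cardinal.mk {c : ↥(Kcore 6) → ℕ // IsSatisfactoryOnCore 6 c} =
      Cardinal.continuum ∧
    ∃ c : ↥(Kcore 6) → ℕ, IsSatisfactoryOnCore 6 c ∧
      ¬ (∃ op : ℕ → ℕ → ℕ, IsCommGroupOpOn 6 op ∧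
        ∀ a b x : ↥(Kcore 6), (x : ℕ) = (a : ℕ) * (b : ℕ) →
          c x = op (c a) (c b)) := by
  refine ⟨le_antisymm ?_ ?_, ?_⟩
  · refine (Cardinal.mk_subtype_le _).trans ?_
    rw [← Cardinal.power_def, Cardinal.mk_nat, ← Cardinal.aleph0_power_aleph0]
    exact Cardinal.power_le_power_left Cardinal.aleph0_ne_zero (Cardinal.mk_le_aleph0)
  · have : Cardinal.mk (ℕ → Bool) = Cardinal.continuum := by simp
    rw [← this]
    refine Cardinal.mk_le_of_injective
      (f := fun s => ⟨fun x => col s x, col_sat s⟩) ?_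
    intro s t h
    funext n
    have h1 := congrFun (congrArg Subtype.val h) ⟨_, form_core 1 (n + 2) 0⟩
    simp only at h1
    rw [col_probe, col_probe] at h1
    have := (colG_inj (by omega) (by split_ifs <;> omega) (by omega)
      (by split_ifs <;> omega) h1).2
    cases hs : s n <;> cases ht : t n <;> simp [hs, ht] at this ⊢
  · refine ⟨_, col_sat (fun _ => true), ?_⟩
    rintro ⟨op, -, h⟩
    have h1 := h ⟨_, form_core 1 0 0⟩ ⟨_, form_core 0 2 0⟩ ⟨_, form_core 1 2 0⟩ (by simp)
    have h2 := h ⟨_, form_core 1 0 0⟩ ⟨_, form_core 0 0 0⟩ ⟨_, form_core 1 0 0⟩ (by simp)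
    simp only [col_form] at h1 h2
    simp [colF, colG] at h1 h2
    omega
end
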